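/- arXiv:2303.01293 — 12 statements merged into one kernel-verified Lean document; each statement's English description precedes it below -/
import Mathlib

section
/- For all real numbers α and β: cos²(α) + cos²(β) ≤ |2·cos²(α − β) − 1| + 2·cos²(π/8). -/
open Real

/-!
By the product formula, `cos² α + cos² β = 1 + cos (α + β) cos (α - β) ≤ 1 + t` with
`t = |cos (α - β)|`, while `2 cos² (π / 8) = 1 + s` with `s = √2 / 2`. It remains to see that
`t ≤ |2 t² - 1| + s`. This is clear for `t ≤ s`; for `t ≥ s` it follows from
`2 t² - 1 - (t - s) = (t - s) (2 t + 2 s - 1)`, as `2 s² = 1` and `2 s ≥ 1`.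
-/

theorem stmt_0 (α β : ℝ) :
    cos α ^ 2 + cos β ^ 2 ≤ |2 * cos (α - β) ^ 2 - 1| + 2 * cos (π / 8) ^ 2 := by
  have h8 : 2 * cos (π / 8) ^ 2 = 1 + √2 / 2 := by
    have h := cos_sq (π / 8)
    rw [show 2 * (π / 8) = π / 4 by ring, cos_pi_div_four] at h
    linarith
  have hprod : cos α ^ 2 + cos β ^ 2 = 1 + cos (α + β) * cos (α - β) := by
    rw [cos_add, cos_sub]
    have ha := sin_sq α
    have hb := sin_sq β
    linear_combination sin β ^ 2 * ha + (1 - cos α ^ 2) * hb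
  have hle : cos (α + β) * cos (α - β) ≤ |cos (α - β)| := by
    refine (le_abs_self _).trans ?_
    rw [abs_mul]
    exact mul_le_of_le_one_left (abs_nonneg _) (abs_cos_le_one _)
  rw [hprod, h8, ← sq_abs (cos (α - β))]
  have ht := abs_nonneg (cos (α - β))
  generalize |cos (α - β)| = t at *
  have hs : √2 ^ 2 = 2 := sq_sqrt (by norm_num)
  have hs1 : 1 ≤ √2 := one_le_sqrt.mpr (by norm_num)
  rcases le_total t (√2 / 2) with h | h
  · linarith [abs_nonneg (2 * t ^ 2 - 1)]
  · have hfac : 0 ≤ (t - √2 / 2) * (2 * t + √2 - 1) :=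
      mul_nonneg (by linarith) (by linarith)
    linarith [le_abs_self (2 * t ^ 2 - 1)]
end

section
/- For all real numbers x and y: cos(x)·cos(y) ≤ |2·cos²(y) − 1| + 1/√2. -/
open Real

/-!
Put `c = |cos y|` and `s = 1 / √2`, so `cos x * cos y ≤ c`. If `c ≤ s` the bound is immediate.
Otherwise `2 c² - 1 = 2 (c - s) (c + s) ≥ c - s`, because `2 (c + s) ≥ 4 s ≥ 1`.
-/

theorem stmt_1 (x y : ℝ) :
    cos x * cos y ≤ |2 * cos y ^ 2 - 1| + 1 / Real.sqrt 2 := by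
  have hc : cos x * cos y ≤ |cos y| := by
    calc cos x * cos y ≤ |cos x * cos y| := le_abs_self _
      _ = |cos x| * |cos y| := abs_mul _ _
      _ ≤ 1 * |cos y| := mul_le_mul_of_nonneg_right (abs_cos_le_one x) (abs_nonneg _)
      _ = |cos y| := one_mul _
  have hs0 : 0 < 1 / Real.sqrt 2 := by positivity
  have hs2 : (1 / Real.sqrt 2) ^ 2 = 1 / 2 := by
    rw [div_pow, Real.sq_sqrt (by norm_num)]; norm_num
  rw [← sq_abs (cos y)]
  generalize 1 / Real.sqrt 2 = s at *
  generalize |cos y| = c at *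
  have habs := le_abs_self (2 * c ^ 2 - 1)
  rcases le_total c s with h | h
  · linarith [abs_nonneg (2 * c ^ 2 - 1)]
  · have hs : 1 / 2 ≤ s := by nlinarith
    nlinarith [mul_nonneg (sub_nonneg.2 h) (by linarith : 0 ≤ 2 * (c + s) - 1)]
end

section
/- Let H be a finite-dimensional complex inner product space and let Q₀, Q₁ : H → H be linear maps that are idempotent (Qᵢ ∘ Qᵢ = Qᵢ) and self-adjoint (⟪Qᵢ x, y⟫ = ⟪x, Qᵢ y⟫ for all x, y). Then there exists a finite family of pairwise orthogonal subspaces H₁, …, H_k of H, each of dimension at most 2, each invariant under both Q₀ and Q₁ (i.e. Qⱼ maps Hᵢ into Hᵢ for j = 0,1), such that H is the internal direct sum (equivalently, the orthogonal direct sum) of the Hᵢ. -/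
open scoped InnerProductSpace

/-!
For an eigenvector `v` of `Q₀ + Q₁` with eigenvalue `μ`, the span of `v` and `Q₀ v` is invariant
under both projections: `Q₁ v = μ v - Q₀ v`, and hence
`Q₁ (Q₀ v) = Q₁ (μ v - Q₁ v) = (μ - 1) Q₁ v`. So every nonzero invariant subspace contains a
nonzero invariant subspace of dimension at most two (`exists_small_invariant`). By self-adjointness
its orthogonal complement is again invariant, and splitting off such pieces one after another
decomposes the whole space (`exists_orthogonal_decomposition`).
-/

/-- Self-adjointness plays no role here; the eigenvector exists because `ℂ` is algebraically
closed. -/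
lemma exists_small_invariant {H : Type*} [NormedAddCommGroup H] [InnerProductSpace ℂ H]
    [FiniteDimensional ℂ H] (Q₀ Q₁ : H →ₗ[ℂ] H)
    (h₀ : ∀ x, Q₀ (Q₀ x) = Q₀ x) (h₁ : ∀ x, Q₁ (Q₁ x) = Q₁ x)
    (W : Submodule ℂ H) (hW : ∀ x ∈ W, Q₀ x ∈ W ∧ Q₁ x ∈ W) (hne : W ≠ ⊥) :
    ∃ U : Submodule ℂ H, U ≤ W ∧ U ≠ ⊥ ∧ Module.finrank ℂ U ≤ 2 ∧
      ∀ x ∈ U, Q₀ x ∈ U ∧ Q₁ x ∈ U := by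
  have hA : ∀ x ∈ W, (Q₀ + Q₁) x ∈ W := fun x hx => W.add_mem (hW x hx).1 (hW x hx).2
  have : Nontrivial W := Submodule.nontrivial_iff_ne_bot.mpr hne
  obtain ⟨μ, hμ⟩ := Module.End.exists_eigenvalue ((Q₀ + Q₁).restrict hA)
  obtain ⟨⟨v, hvW⟩, hv⟩ := hμ.exists_hasEigenvector
  have hv0 : v ≠ 0 := fun h => hv.2 (Subtype.ext h)
  have hev : Q₀ v + Q₁ v = μ • v := congrArg Subtype.val hv.apply_eq_smul
  have hQ₁v : Q₁ v = μ • v - Q₀ v := eq_sub_of_add_eq' hev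
  have hQ₁Q₀v : Q₁ (Q₀ v) = μ • Q₁ v - Q₁ v := by
    rw [eq_sub_of_add_eq hev, map_sub, map_smul, h₁]
  have hvU : v ∈ Submodule.span ℂ {v, Q₀ v} := Submodule.subset_span (by simp)
  have hQvU : Q₀ v ∈ Submodule.span ℂ {v, Q₀ v} := Submodule.subset_span (by simp)
  have hQ₁U : Q₁ v ∈ Submodule.span ℂ {v, Q₀ v} := by
    rw [hQ₁v]
    exact Submodule.sub_mem _ (Submodule.smul_mem _ _ hvU) hQvU
  refine ⟨Submodule.span ℂ {v, Q₀ v}, ?_, ?_, ?_, ?_⟩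
  · rw [Submodule.span_le]
    rintro x (rfl | rfl)
    exacts [hvW, (hW v hvW).1]
  · intro h
    rw [h] at hvU
    exact hv0 ((Submodule.mem_bot ℂ).mp hvU)
  · classical
    have h := finrank_span_finset_le_card (R := ℂ) ({v, Q₀ v} : Finset H)
    rw [Finset.coe_pair] at h
    exact h.trans Finset.card_le_two
  · intro x hx
    obtain ⟨a, b, rfl⟩ := Submodule.mem_span_pair.mp hx
    simp only [map_add, map_smul, h₀, hQ₁Q₀v]
    exact ⟨Submodule.add_mem _ (Submodule.smul_mem _ _ hQvU) (Submodule.smul_mem _ _ hQvU),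
      Submodule.add_mem _ (Submodule.smul_mem _ _ hQ₁U)
        (Submodule.smul_mem _ _ (Submodule.sub_mem _ (Submodule.smul_mem _ _ hQ₁U) hQ₁U))⟩

/-- Stated for an arbitrary invariant subspace `W`, so that the induction on `finrank ℂ W` can pass
to the complement of a small piece inside `W`. -/
lemma exists_orthogonal_decomposition {H : Type*} [NormedAddCommGroup H] [InnerProductSpace ℂ H]
    [FiniteDimensional ℂ H] (Q₀ Q₁ : H →ₗ[ℂ] H)
    (h₀ : ∀ x, Q₀ (Q₀ x) = Q₀ x) (h₁ : ∀ x, Q₁ (Q₁ x) = Q₁ x)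
    (hQ₀sa : ∀ x y : H, ⟪Q₀ x, y⟫_ℂ = ⟪x, Q₀ y⟫_ℂ)
    (hQ₁sa : ∀ x y : H, ⟪Q₁ x, y⟫_ℂ = ⟪x, Q₁ y⟫_ℂ)
    (W : Submodule ℂ H) (hW : ∀ x ∈ W, Q₀ x ∈ W ∧ Q₁ x ∈ W) :
    ∃ (k : ℕ) (V : Fin k → Submodule ℂ H),
      (∀ i, Module.finrank ℂ (V i) ≤ 2) ∧
      (∀ i j, i ≠ j → ∀ x ∈ V i, ∀ y ∈ V j, ⟪x, y⟫_ℂ = 0) ∧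
      (∀ i, ∀ x ∈ V i, Q₀ x ∈ V i ∧ Q₁ x ∈ V i) ∧
      ⨆ i, V i = W := by
  induction hn : Module.finrank ℂ W using Nat.strong_induction_on generalizing W with
  | _ n ih =>
  subst hn
  by_cases hne : W = ⊥
  · exact ⟨0, Fin.elim0, fun i => i.elim0, fun i => i.elim0, fun i => i.elim0, by simp [hne]⟩
  obtain ⟨U, hUW, hU0, hU2, hU⟩ := exists_small_invariant Q₀ Q₁ h₀ h₁ W hW hne
  have hlt : Uᗮ ⊓ W < W := by
    refine lt_of_le_of_ne inf_le_right fun h => hU0 ?_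
    have hle : U ≤ Uᗮ := hUW.trans (inf_eq_right.mp h)
    exact le_bot_iff.mp (U.inf_orthogonal_eq_bot ▸ le_inf le_rfl hle)
  have hinv : ∀ x ∈ Uᗮ ⊓ W, Q₀ x ∈ Uᗮ ⊓ W ∧ Q₁ x ∈ Uᗮ ⊓ W := by
    rintro x ⟨hx, hxW⟩
    refine ⟨⟨fun u hu => ?_, (hW x hxW).1⟩, ⟨fun u hu => ?_, (hW x hxW).2⟩⟩
    · rw [← hQ₀sa]
      exact hx _ (hU u hu).1
    · rw [← hQ₁sa]
      exact hx _ (hU u hu).2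
  obtain ⟨k, V, hV2, hVo, hVi, hVs⟩ :=
    ih _ (Submodule.finrank_lt_finrank_of_lt hlt) _ hinv rfl
  have hVU : ∀ i, ∀ y ∈ V i, y ∈ Uᗮ := fun i y hy =>
    (hVs ▸ le_iSup V i : V i ≤ Uᗮ ⊓ W) hy |>.1
  refine ⟨k + 1, Fin.cons U V, ?_, ?_, ?_, ?_⟩
  · exact Fin.cases hU2 hV2
  · intro i j
    refine Fin.cases ?_ (fun i => ?_) i <;> refine Fin.cases ?_ (fun j => ?_) j
    · exact fun h => absurd rfl h
    · exact fun _ x hx y hy => hVU j y hy x hx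
    · exact fun _ x hx y hy => inner_eq_zero_symm.mp (hVU i x hx y hy)
    · exact fun h => hVo i j fun hij => h (congrArg Fin.succ hij)
  · exact Fin.cases hU hVi
  · have hsplit : ⨆ i, (Fin.cons U V : Fin (k + 1) → Submodule ℂ H) i = U ⊔ ⨆ i, V i := by
      refine le_antisymm (iSup_le (Fin.cases le_sup_left fun i => ?_))
        (sup_le ?_ (iSup_le fun i => ?_))
      · exact le_iSup (Fin.cons U V : Fin (k + 1) → Submodule ℂ H) 0
      · exact le_iSup (Fin.cons U V : Fin (k + 1) → Submodule ℂ H) i.succ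
      · exact (le_iSup V i).trans le_sup_right
    rw [hsplit, hVs]
    exact Submodule.sup_orthogonal_inf_of_hasOrthogonalProjection hUW

/-- Jordan's lemma for a pair of orthogonal projections on a finite-dimensional
complex inner product space. -/
theorem stmt_3 {H : Type*} [NormedAddCommGroup H] [InnerProductSpace ℂ H]
    [FiniteDimensional ℂ H] (Q₀ Q₁ : H →ₗ[ℂ] H)
    (hQ₀idem : Q₀ ∘ₗ Q₀ = Q₀) (hQ₁idem : Q₁ ∘ₗ Q₁ = Q₁)
    (hQ₀sa : ∀ x y : H, ⟪Q₀ x, y⟫_ℂ = ⟪x, Q₀ y⟫_ℂ)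
    (hQ₁sa : ∀ x y : H, ⟪Q₁ x, y⟫_ℂ = ⟪x, Q₁ y⟫_ℂ) :
    ∃ (k : ℕ) (V : Fin k → Submodule ℂ H),
      (∀ i, Module.finrank ℂ (V i) ≤ 2) ∧
      (∀ i j, i ≠ j → ∀ x ∈ V i, ∀ y ∈ V j, ⟪x, y⟫_ℂ = 0) ∧
      (∀ i, ∀ x ∈ V i, Q₀ x ∈ V i ∧ Q₁ x ∈ V i) ∧
      DirectSum.IsInternal V := by
  obtain ⟨k, V, hV2, hVo, hVi, hVs⟩ := exists_orthogonal_decomposition Q₀ Q₁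
    (LinearMap.congr_fun hQ₀idem) (LinearMap.congr_fun hQ₁idem) hQ₀sa hQ₁sa ⊤
    (fun _ _ => ⟨trivial, trivial⟩)
  refine ⟨k, V, hV2, hVo, hVi, ?_⟩
  have hfam : OrthogonalFamily ℂ (fun i => V i) fun i => (V i).subtypeₗᵢ :=
    fun i j hij x y => hVo i j hij x x.2 y y.2
  rw [hfam.isInternal_iff, hVs, Submodule.top_orthogonal_eq_bot]
end

section
/- For real numbers α and β, let Q(θ) denote the 2×2 real matrix with entries Q(θ)₀₀ = cos²(θ), Q(θ)₀₁ = Q(θ)₁₀ = cos(θ)sin(θ), Q(θ)₁₁ = sin²(θ), and set M = Q(β)·Q(α) + (1 − Q(β))·(1 − Q(α)). Then for every vector v ∈ ℝ², ‖M·v‖² = cos²(α − β)·‖v‖². -/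
open Real

/-- The matrix `M` is `cos (α - β)` times the rotation by `β - α`. -/
lemma proj_mul_add_compl_eq_smul_rotation (α β : ℝ) :
    let Q : ℝ → Matrix (Fin 2) (Fin 2) ℝ := fun θ =>
      !![cos θ ^ 2, cos θ * sin θ; cos θ * sin θ, sin θ ^ 2]
    Q β * Q α + (1 - Q β) * (1 - Q α) =
      cos (α - β) • !![cos (α - β), sin (α - β); -sin (α - β), cos (α - β)] := by
  intro Q
  have ha : sin α ^ 2 = 1 - cos α ^ 2 := sin_sq α
  have hb : sin β ^ 2 = 1 - cos β ^ 2 := sin_sq β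
  ext i j
  fin_cases i <;> fin_cases j <;>
    simp [Q, Matrix.mul_apply, Fin.sum_univ_two, cos_sub, sin_sub] <;> grind

theorem stmt_5 (α β : ℝ) (v : EuclideanSpace ℝ (Fin 2)) :
    let Q : ℝ → Matrix (Fin 2) (Fin 2) ℝ := fun θ =>
      !![cos θ ^ 2, cos θ * sin θ; cos θ * sin θ, sin θ ^ 2]
    let M := Q β * Q α + (1 - Q β) * (1 - Q α)
    ‖(WithLp.equiv 2 (Fin 2 → ℝ)).symm (M.mulVec (WithLp.equiv 2 (Fin 2 → ℝ) v))‖ ^ 2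
      = cos (α - β) ^ 2 * ‖v‖ ^ 2 := by
  intro Q M
  have hM : M = cos (α - β) • !![cos (α - β), sin (α - β); -sin (α - β), cos (α - β)] :=
    proj_mul_add_compl_eq_smul_rotation α β
  have hs : sin (α - β) ^ 2 = 1 - cos (α - β) ^ 2 := sin_sq _
  rw [hM, EuclideanSpace.real_norm_sq_eq, EuclideanSpace.real_norm_sq_eq]
  simp only [Fin.sum_univ_two, WithLp.equiv_symm_apply, WithLp.equiv_apply, Matrix.mulVec,
    dotProduct, Matrix.smul_apply, Matrix.of_apply, Matrix.cons_val_zero, Matrix.cons_val_one,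
    Matrix.cons_val', Matrix.cons_val_fin_one, smul_eq_mul]
  linear_combination cos (α - β) ^ 2 * (v 0 ^ 2 + v 1 ^ 2) * hs
end

section
/- For every real number x with 0 ≤ x ≤ π: |cos(x) − 1/√2| ≥ (1/4)·|x − π/4|. -/
/-!
To the left of `π / 4`, concavity of the cosine puts it above its chord on `[0, π / 4]`, whose slope
has absolute value `(1 - √2 / 2) / (π / 4) ≥ 1 / 4`. To the right of `π / 4`, write
`cos (π / 4) - cos x = 2 sin ((x + π / 4) / 2) sin ((x - π / 4) / 2)`; Jordan's inequality
`2 / π * t ≤ sin t` bounds the first sine below by `1 / 2` and the second by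
`(x - π / 4) / π`, and `1 / π ≥ 1 / 4`.
-/

open Real

lemma cos_sub_ge_left (x : ℝ) (h0 : 0 ≤ x) (hx : x ≤ π / 4) :
    (1 / 4) * (π / 4 - x) ≤ cos x - √2 / 2 := by
  have hpi := pi_pos
  set t : ℝ := x / (π / 4) with ht
  have ht0 : 0 ≤ t := by positivity
  have ht1 : t ≤ 1 := by rw [ht, div_le_one (by positivity)]; exact hx
  have hxt : x = t * (π / 4) := by rw [ht]; field_simp
  have hc := strictConcaveOn_cos_Icc.concaveOn.2 (x := 0) (y := π / 4)
    ⟨by linarith, by linarith⟩ ⟨by linarith, by linarith⟩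
    (sub_nonneg.2 ht1) ht0 (by ring)
  simp only [smul_eq_mul, mul_zero, zero_add, cos_zero, cos_pi_div_four, ← hxt] at hc
  have h2 : √2 ≤ 1.415 := by
    rw [sqrt_le_left (by norm_num)]; norm_num
  have hp := pi_lt_d2
  have := mul_nonneg (sub_nonneg.2 ht1) (show 0 ≤ 1 - √2 / 2 - π / 16 by linarith)
  nlinarith

lemma cos_sub_ge_right (x : ℝ) (hx : π / 4 ≤ x) (h1 : x ≤ π) :
    (1 / 4) * (x - π / 4) ≤ √2 / 2 - cos x := by
  have hpi := pi_pos
  have hs : 1 / 2 ≤ sin ((x + π / 4) / 2) := by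
    rcases le_total ((x + π / 4) / 2) (π / 2) with h | h
    · refine le_trans ?_ (mul_le_sin (by linarith) h)
      rw [div_mul_eq_mul_div, le_div_iff₀ hpi]; linarith
    · rw [← sin_pi_sub]
      refine le_trans ?_ (mul_le_sin (by linarith) (by linarith))
      rw [div_mul_eq_mul_div, le_div_iff₀ hpi]; linarith
  have hd : (1 / 4) * (x - π / 4) ≤ sin ((x - π / 4) / 2) := by
    refine le_trans ?_ (mul_le_sin (by linarith) (by linarith))
    rw [div_mul_eq_mul_div 2 π, le_div_iff₀ hpi]
    nlinarith [pi_le_four]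
  have hcos := cos_sub_cos x (π / 4)
  rw [cos_pi_div_four] at hcos
  nlinarith

theorem stmt_10 (x : ℝ) (h0 : 0 ≤ x) (h1 : x ≤ π) :
    |cos x - 1 / Real.sqrt 2| ≥ (1 / 4) * |x - π / 4| := by
  have hr : 1 / √2 = √2 / 2 := by
    rw [div_eq_div_iff (by positivity) (by norm_num)]; norm_num
  rw [hr]
  rcases le_total x (π / 4) with h | h
  · rw [abs_of_nonpos (sub_nonpos.2 h), neg_sub]
    exact (cos_sub_ge_left x h0 h).trans (le_abs_self _)
  · rw [abs_of_nonneg (sub_nonneg.2 h), abs_sub_comm]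
    exact (cos_sub_ge_right x h h1).trans (le_abs_self _)
end

section
/- Let n be a natural number, t : Fin n → ℝ with t i ≥ 0 for all i and Σᵢ t i = 1, and α, β : Fin n → ℝ. Then (1/2)·Σᵢ t i·(cos²(α i) + cos²(β i)) ≤ cos²(π/8) + |Σᵢ t i·cos²(α i − β i) − 1/2|. -/
open Real

/-! Since `cos² a + cos² b = 1 + cos (a + b) cos (a - b)`, each summand is at most
`1/2 + √x / 2` where `x = cos² (a - b)`. This is concave in `x`, so it lies below its tangent at
`x = 1/2`, which is `cos² (π/8) + (√2/4) (x - 1/2)` (`half_cos_sq_add_le`). Averaging with the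
weights `t` keeps the affine bound, and the slope `√2/4` is at most `1`. -/

/-- The tangent-line bound at `cos² (a - b) = 1/2`. -/
lemma half_cos_sq_add_le (a b : ℝ) :
    (1 / 2) * (cos a ^ 2 + cos b ^ 2)
      ≤ cos (π / 8) ^ 2 + √2 / 4 * (cos (a - b) ^ 2 - 1 / 2) := by
  have h8 : cos (π / 8) ^ 2 = 1 / 2 + √2 / 4 := by
    rw [cos_sq, show 2 * (π / 8) = π / 4 by ring, cos_pi_div_four]
    ring
  have hid : cos a ^ 2 + cos b ^ 2 = 1 + cos (a + b) * cos (a - b) := by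
    rw [cos_add, cos_sub]
    linear_combination (-cos b ^ 2 + 1) * sin_sq_add_cos_sq a
      + (sin a ^ 2) * sin_sq_add_cos_sq b
  have hs : √2 * √2 = 2 := mul_self_sqrt (by norm_num)
  have hs0 : 0 ≤ √2 := sqrt_nonneg 2
  have hp : cos (a + b) ^ 2 ≤ 1 := cos_sq_le_one _
  rw [h8, hid]
  generalize cos (a + b) = p at *
  generalize cos (a - b) = c at *
  -- The difference of the two sides is `(√2/4) (c - √2 p / 2)² + (√2/8) (1 - p²)`.
  have h1 : 0 ≤ √2 / 4 * (c - √2 * p / 2) ^ 2 := by positivity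
  have h2 : 0 ≤ √2 / 8 * (1 - p ^ 2) := mul_nonneg (by positivity) (by linarith)
  have h3 : √2 / 4 * (c - √2 * p / 2) ^ 2
      = √2 / 4 * c ^ 2 - c * p / 2 + √2 / 8 * p ^ 2 := by
    linear_combination (-(c * p) / 4 + √2 * p ^ 2 / 16) * hs
  linarith

theorem stmt_12 (n : ℕ) (t α β : Fin n → ℝ)
    (ht : ∀ i, 0 ≤ t i) (hsum : ∑ i, t i = 1) :
    (1 / 2) * ∑ i, t i * (cos (α i) ^ 2 + cos (β i) ^ 2)
      ≤ cos (π / 8) ^ 2 + |(∑ i, t i * cos (α i - β i) ^ 2) - 1 / 2| := by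
  have hle : (1 / 2) * ∑ i, t i * (cos (α i) ^ 2 + cos (β i) ^ 2)
      ≤ ∑ i, (t i * (cos (π / 8) ^ 2 - √2 / 8) + √2 / 4 * (t i * cos (α i - β i) ^ 2)) := by
    rw [Finset.mul_sum]
    refine Finset.sum_le_sum fun i _ => ?_
    linarith [mul_le_mul_of_nonneg_left (half_cos_sq_add_le (α i) (β i)) (ht i)]
  rw [Finset.sum_add_distrib, ← Finset.sum_mul, ← Finset.mul_sum, hsum] at hle
  generalize (∑ i, t i * cos (α i - β i) ^ 2) = x at *
  have hs : √2 / 4 ≤ 1 := by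
    linarith [(sqrt_le_left (by norm_num : (0 : ℝ) ≤ 2)).2 (by norm_num : (2 : ℝ) ≤ 2 ^ 2)]
  have h1 : √2 / 4 * (x - 1 / 2) ≤ √2 / 4 * |x - 1 / 2| :=
    mul_le_mul_of_nonneg_left (le_abs_self _) (by positivity)
  have h2 : √2 / 4 * |x - 1 / 2| ≤ 1 * |x - 1 / 2| :=
    mul_le_mul_of_nonneg_right hs (abs_nonneg _)
  linarith
end

section
/- Let n be a natural number, t : Fin n → ℝ with t i ≥ 0 for all i and Σᵢ t i = 1, and let a, b : Fin n → ℝ with a i ∈ {0, 1} and b i ∈ {0, 1} for all i. Define p_xor = Σᵢ t i·(if a i = b i then 1 else 0). Then (1/2)·Σᵢ t i·(a i + b i) ≤ 3/4 + (1/2)·|p_xor − 1/2|. -/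
theorem stmt_13 (n : ℕ) (t a b : Fin n → ℝ)
    (ht : ∀ i, 0 ≤ t i) (hsum : ∑ i, t i = 1)
    (ha : ∀ i, a i = 0 ∨ a i = 1) (hb : ∀ i, b i = 0 ∨ b i = 1) :
    (1 / 2) * ∑ i, t i * (a i + b i)
      ≤ 3 / 4 + (1 / 2) * |(∑ i, t i * (if a i = b i then (1 : ℝ) else 0)) - 1 / 2| := by
  -- For bits, `a + b ≤ 1 + [a = b]`; averaging gives success probability at most `(1 + p_xor) / 2`,
  -- which equals `3 / 4 + (p_xor - 1 / 2) / 2`.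
  have hle : ∑ i, t i * (a i + b i)
      ≤ ∑ i, (t i + t i * (if a i = b i then (1 : ℝ) else 0)) := by
    refine Finset.sum_le_sum fun i _ => ?_
    have hi := ht i
    rcases ha i with h | h <;> rcases hb i with h' | h' <;> simp [h, h'] <;> linarith
  rw [Finset.sum_add_distrib, hsum] at hle
  linarith [le_abs_self ((∑ i, t i * (if a i = b i then (1 : ℝ) else 0)) - 1 / 2)]
end

section
/- There exists a constant C > 0 such that the following holds. Let n be a natural number, t : Fin n → ℝ with t i ≥ 0 and Σᵢ t i = 1, α, β : Fin n → ℝ with α i, β i ∈ [−π/2, π/2) for all i, and ε, s ≥ 0. Suppose (1/2)·Σᵢ t i·(cos²(α i) + cos²(β i)) ≥ cos²(π/8) − ε and |Σᵢ t i·cos²(α i − β i) − 1/2| ≤ s. Then Σ_{i ∈ S'} t i ≤ C·(ε + s), where S' = { i : |α i| > 3π/16 or |β i| > 3π/16 }. -/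
/-!
Write `x = cos (a - b)` and `y = cos (a + b)` for a block with angles `a`, `b`. Then
`cos² a + cos² b - 1 = x y`, and the two hypotheses control the averages of `x y` and `x²`:
the first is at least `√2 / 2 - 2 ε`, the second is within `s` of `1 / 2`. The quantity
`x² + 1 / 2 - √2 x y = (x - (√2 / 2) y)² + (1 - y²) / 2` (`gap_eq`) is nonnegative, and its
average is at most `s + 2 √2 ε`. If it is below `1 / 100`, then `y² ≈ 1` and `x y ≈ √2 / 2`, and
since `cos (2 a) - x y = - sin (a + b) sin (a - b)` is small, `cos (2 a) > 2 / 5`. This is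
impossible when `3π/16 < |a| ≤ π/2`, because `cos (3π/8) = sin (π/8) < 2 / 5`. By symmetry in
`a` and `b`, every block of the bad set has gap at least `1 / 100` (`gap_lower`), and the bound
follows as in Markov's inequality, with `C = 300`.
-/

open Real

lemma cos_sq_add_cos_sq (a b : ℝ) :
    cos a ^ 2 + cos b ^ 2 - 1 = cos (a - b) * cos (a + b) := by
  rw [cos_sub, cos_add]
  linear_combination sin b ^ 2 * sin_sq_add_cos_sq a +
    (1 - cos a ^ 2) * sin_sq_add_cos_sq b

lemma gap_eq (a b : ℝ) :
    cos (a - b) ^ 2 + 1 / 2 - √2 * (cos a ^ 2 + cos b ^ 2 - 1) =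
      (cos (a - b) - √2 / 2 * cos (a + b)) ^ 2 + (1 - cos (a + b) ^ 2) / 2 := by
  have h2 : √2 ^ 2 = 2 := sq_sqrt (by norm_num)
  rw [cos_sq_add_cos_sq]
  linear_combination (-cos (a + b) ^ 2 / 4) * h2

lemma gap_nonneg (a b : ℝ) :
    0 ≤ cos (a - b) ^ 2 + 1 / 2 - √2 * (cos a ^ 2 + cos b ^ 2 - 1) := by
  rw [gap_eq]
  nlinarith [cos_sq_le_one (a + b), sq_nonneg (cos (a - b) - √2 / 2 * cos (a + b))]

lemma cos_two_mul_le {a : ℝ} (h : 3 * π / 16 < |a|) (h' : |a| ≤ π / 2) :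
    cos (2 * a) ≤ 2 / 5 := by
  have h1 : cos (2 * a) = cos (2 * |a|) := by
    rw [← cos_abs (2 * a), abs_mul, abs_two]
  have h2 : cos (2 * |a|) ≤ cos (π / 2 - π / 8) :=
    cos_le_cos_of_nonneg_of_le_pi (by linarith [pi_pos]) (by linarith) (by linarith)
  have h3 : sin (π / 8) ≤ 2 / 5 := by
    rw [sin_pi_div_eight]
    have h4 : (1.4 : ℝ) ≤ √2 := le_sqrt_of_sq_le (by norm_num)
    have h5 : √(2 - √2) ≤ 4 / 5 := by
      rw [sqrt_le_left (by norm_num)]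
      linarith
    linarith
  rw [cos_pi_div_two_sub] at h2
  linarith

/-- A block whose gap is small has `cos (2 a)` close to `√2 / 2`. -/
lemma lt_cos_two_mul_of_gap_lt {a b : ℝ}
    (h : cos (a - b) ^ 2 + 1 / 2 - √2 * (cos a ^ 2 + cos b ^ 2 - 1) < 1 / 100) :
    2 / 5 < cos (2 * a) := by
  rw [gap_eq] at h
  have hA : cos (2 * a) = cos (a - b) * cos (a + b) - sin (a - b) * sin (a + b) := by
    rw [← cos_add]
    ring_nf
  have hx := sin_sq_add_cos_sq (a - b)
  have hy := sin_sq_add_cos_sq (a + b)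
  have hr : (1.4 : ℝ) ≤ √2 := le_sqrt_of_sq_le (by norm_num)
  rw [hA]
  generalize cos (a - b) = x at *
  generalize cos (a + b) = y at *
  generalize sin (a - b) = u at *
  generalize sin (a + b) = v at *
  have hv : v ^ 2 ≤ 1 / 50 := by nlinarith [sq_nonneg (x - √2 / 2 * y)]
  have hd : (x - √2 / 2 * y) ^ 2 ≤ (1 / 10) ^ 2 := by nlinarith [sq_nonneg v]
  have huv : u * v ≤ 3 / 20 := by
    apply le_of_abs_le
    apply abs_le_of_sq_le_sq _ (by norm_num)
    have hu : u ^ 2 ≤ 1 := by nlinarith [sq_nonneg x]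
    nlinarith [sq_nonneg v]
  have hdy : -(1 / 10) ≤ (x - √2 / 2 * y) * y := by
    apply neg_le_of_abs_le
    apply abs_le_of_sq_le_sq _ (by norm_num)
    have hy1 : y ^ 2 ≤ 1 := by nlinarith [sq_nonneg v]
    nlinarith [sq_nonneg y]
  have hxy : 0.98 * 0.7 ≤ √2 / 2 * y ^ 2 := by nlinarith
  nlinarith

lemma gap_lower {a b : ℝ} (ha : a ∈ Set.Ico (-(π / 2)) (π / 2))
    (hb : b ∈ Set.Ico (-(π / 2)) (π / 2)) (h : 3 * π / 16 < |a| ∨ 3 * π / 16 < |b|) :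
    1 / 100 ≤ cos (a - b) ^ 2 + 1 / 2 - √2 * (cos a ^ 2 + cos b ^ 2 - 1) := by
  by_contra! hlt
  rcases h with h | h
  · exact (lt_cos_two_mul_of_gap_lt hlt).not_ge
      (cos_two_mul_le h (abs_le.2 ⟨ha.1, ha.2.le⟩))
  · have hlt' : cos (b - a) ^ 2 + 1 / 2 - √2 * (cos b ^ 2 + cos a ^ 2 - 1) < 1 / 100 := by
      rw [← cos_neg (b - a), neg_sub, add_comm (cos b ^ 2)]
      exact hlt
    exact (lt_cos_two_mul_of_gap_lt hlt').not_ge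
      (cos_two_mul_le h (abs_le.2 ⟨hb.1, hb.2.le⟩))

theorem stmt_14 :
    ∃ C > (0 : ℝ), ∀ (n : ℕ) (t α β : Fin n → ℝ) (ε s : ℝ),
      (∀ i, 0 ≤ t i) → (∑ i, t i = 1) →
      (∀ i, α i ∈ Set.Ico (-(π / 2)) (π / 2)) →
      (∀ i, β i ∈ Set.Ico (-(π / 2)) (π / 2)) →
      0 ≤ ε → 0 ≤ s →
      cos (π / 8) ^ 2 - ε ≤ (1 / 2) * ∑ i, t i * (cos (α i) ^ 2 + cos (β i) ^ 2) →
      |(∑ i, t i * cos (α i - β i) ^ 2) - 1 / 2| ≤ s →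
      ∀ S' : Finset (Fin n),
        (∀ i, i ∈ S' ↔ (3 * π / 16 < |α i| ∨ 3 * π / 16 < |β i|)) →
        ∑ i ∈ S', t i ≤ C * (ε + s) := by
  refine ⟨300, by norm_num, ?_⟩
  intro n t α β ε s ht hsum hα hβ hε hs hsucc hpar S' hS
  have hle : ∑ i ∈ S', t i * (1 / 100) ≤ ∑ i, t i * (cos (α i - β i) ^ 2 + 1 / 2 -
      √2 * (cos (α i) ^ 2 + cos (β i) ^ 2 - 1)) := by
    refine (Finset.sum_le_sum fun i hi => mul_le_mul_of_nonneg_left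
      (gap_lower (hα i) (hβ i) ((hS i).1 hi)) (ht i)).trans ?_
    exact Finset.sum_le_sum_of_subset_of_nonneg (Finset.subset_univ _)
      fun i _ _ => mul_nonneg (ht i) (gap_nonneg _ _)
  have hexp : ∑ i, t i * (cos (α i - β i) ^ 2 + 1 / 2 -
      √2 * (cos (α i) ^ 2 + cos (β i) ^ 2 - 1)) =
      ∑ i, t i * cos (α i - β i) ^ 2 + (1 / 2 + √2) * ∑ i, t i -
        √2 * ∑ i, t i * (cos (α i) ^ 2 + cos (β i) ^ 2) := by
    rw [Finset.mul_sum, Finset.mul_sum, ← Finset.sum_add_distrib, ← Finset.sum_sub_distrib]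
    exact Finset.sum_congr rfl fun i _ => by ring
  rw [hexp, hsum, ← Finset.sum_mul] at hle
  have hcos : cos (π / 8) ^ 2 = 1 / 2 + √2 / 4 := by
    rw [cos_sq, show 2 * (π / 8) = π / 4 by ring, cos_pi_div_four]
    ring
  rw [hcos] at hsucc
  have hp := (abs_le.1 hpar).2
  have h2 : √2 ^ 2 = 2 := sq_sqrt (by norm_num)
  have h2' : √2 ≤ 1.5 := by
    rw [sqrt_le_left (by norm_num)]
    norm_num
  have hm := mul_le_mul_of_nonneg_left hsucc (sqrt_nonneg 2)
  have hεm := mul_le_mul_of_nonneg_right h2' hε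
  nlinarith
end

section
/- There exists a constant C > 0 such that the following holds. Let n be a natural number, t : Fin n → ℝ with t i ≥ 0 and Σᵢ t i = 1, α, β : Fin n → ℝ with α i, β i ∈ [−π/2, π/2) for all i, and ε, s ≥ 0. Suppose (1/2)·Σᵢ t i·(cos²(α i) + cos²(β i)) ≥ cos²(π/8) − ε and |Σᵢ t i·cos²(α i − β i) − 1/2| ≤ s. Then Σᵢ t i·(|α i − β i| − π/4)² ≤ C·(ε + √s). -/
/-!
Write `d = α - β` and `u = α + β`. Since `cos² α + cos² β = 1 + cos u * cos d` and
`cos² (π/8) = 1/2 + √2/4`, the two hypotheses say that the average of `cos u * cos d` is at least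
`√2/2 - 2ε` and the average of `cos² d` is at most `1/2 + s`. Hence the average of
`cos² d - √2 * cos u * cos d + 1/2` is at most `s + 2√2 ε`.

It remains to bound `(|d| - π/4)²` pointwise by `40` times that expression (`pointwise_bound`).
The range of the angles gives `|u| + |d| ≤ π`. If `|d| ≤ π/2`, the expression is at least
`(cos d - cos (π/4))²`, which dominates `(|d| - π/4)²` (`abs_sub_le_cos_sub`). If `|d| > π/2`, then
`|u| < π/2`, so `cos u * cos d ≤ 0` and the expression is at least `1/2`.
Finally `s ≤ √s` for `s ≤ 1`, while for `s > 1` the left-hand side is trivially bounded.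
-/

open Real

lemma abs_sub_le_cos_sub {a : ℝ} (h0 : 0 ≤ a) (h1 : a ≤ π / 2) :
    (a - π / 4) ^ 2 ≤ 40 * (cos a - √2 / 2) ^ 2 := by
  have hp := pi_pos
  rw [← cos_pi_div_four, cos_sub_cos]
  -- Both sines are bounded below by Jordan's inequality `2/π * x ≤ sin x`.
  have hA : 1 / 4 ≤ sin ((a + π / 4) / 2) := by
    have h := mul_le_sin (x := (a + π / 4) / 2) (by linarith) (by linarith)
    have h2 : 2 / π * (π / 8) ≤ 2 / π * ((a + π / 4) / 2) :=
      mul_le_mul_of_nonneg_left (by linarith) (by positivity)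
    have h3 : 2 / π * (π / 8) = 1 / 4 := by field_simp; norm_num
    linarith
  have hB : |a - π / 4| / π ≤ |sin ((a - π / 4) / 2)| := by
    have h := mul_abs_le_abs_sin (x := (a - π / 4) / 2)
      (by rw [abs_le]; constructor <;> linarith)
    have h3 : 2 / π * |(a - π / 4) / 2| = |a - π / 4| / π := by
      rw [abs_div, abs_of_pos (by norm_num : (0 : ℝ) < 2)]
      field_simp
    linarith
  have hB2 : (a - π / 4) ^ 2 ≤ 10 * sin ((a - π / 4) / 2) ^ 2 := by
    have h := pow_le_pow_left₀ (by positivity) hB 2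
    rw [div_pow, sq_abs, sq_abs, div_le_iff₀ (by positivity)] at h
    have : π ^ 2 ≤ 10 := by nlinarith [pi_lt_d2]
    nlinarith [sq_nonneg (sin ((a - π / 4) / 2))]
  have hA2 : 1 / 16 ≤ sin ((a + π / 4) / 2) ^ 2 := by nlinarith
  have : 40 * (-2 * sin ((a + π / 4) / 2) * sin ((a - π / 4) / 2)) ^ 2
      = 160 * sin ((a + π / 4) / 2) ^ 2 * sin ((a - π / 4) / 2) ^ 2 := by ring
  rw [this]
  nlinarith [mul_le_mul_of_nonneg_right hA2 (sq_nonneg (sin ((a - π / 4) / 2)))]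

lemma sq_le_six {x y : ℝ} (hx : x ∈ Set.Ico (-(π / 2)) (π / 2))
    (hy : y ∈ Set.Ico (-(π / 2)) (π / 2)) : (|x - y| - π / 4) ^ 2 ≤ 6 := by
  obtain ⟨hx1, hx2⟩ := hx
  obtain ⟨hy1, hy2⟩ := hy
  have h1 : |x - y| ≤ π := by rw [abs_le]; constructor <;> linarith
  have h2 := abs_nonneg (x - y)
  have h3 : π ^ 2 ≤ 10 := by nlinarith [pi_lt_d2, pi_pos]
  have h4 : (|x - y| - π / 4) ^ 2 ≤ (3 * π / 4) ^ 2 := by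
    apply sq_le_sq'
    · linarith [pi_pos]
    · linarith
  nlinarith

lemma pointwise_bound {x y : ℝ} (hx : x ∈ Set.Ico (-(π / 2)) (π / 2))
    (hy : y ∈ Set.Ico (-(π / 2)) (π / 2)) :
    (|x - y| - π / 4) ^ 2 ≤
      40 * (cos (x - y) ^ 2 - √2 * (cos (x + y) * cos (x - y)) + 1 / 2) := by
  have h6 := sq_le_six hx hy
  obtain ⟨hx1, hx2⟩ := hx
  obtain ⟨hy1, hy2⟩ := hy
  have hr : √2 ^ 2 = 2 := sq_sqrt (by norm_num)
  have hr0 : 0 ≤ √2 := sqrt_nonneg 2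
  rcases le_total |x - y| (π / 2) with h | h
  · have h1 := abs_sub_le_cos_sub (abs_nonneg (x - y)) h
    rw [cos_abs] at h1
    have hd : 0 ≤ cos (x - y) :=
      cos_nonneg_of_neg_pi_div_two_le_of_le (by linarith [(abs_le.mp h).1]) (abs_le.mp h).2
    have hm : √2 * (cos (x + y) * cos (x - y)) ≤ √2 * cos (x - y) := by
      gcongr
      exact mul_le_of_le_one_left hd (cos_le_one _)
    nlinarith
  · have hd : cos (x - y) ≤ 0 := by
      rw [← cos_abs]
      refine cos_nonpos_of_pi_div_two_le_of_le h ?_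
      have : |x - y| ≤ π := by rw [abs_le]; constructor <;> linarith
      linarith [pi_pos]
    have hu : 0 ≤ cos (x + y) := by
      rcases le_abs.mp h with h | h <;>
      exact cos_nonneg_of_neg_pi_div_two_le_of_le (by linarith) (by linarith)
    have hm : √2 * (cos (x + y) * cos (x - y)) ≤ 0 :=
      mul_nonpos_of_nonneg_of_nonpos hr0 (mul_nonpos_of_nonneg_of_nonpos hu hd)
    nlinarith [sq_nonneg (cos (x - y))]

lemma cos_sq_add_cos_sq_eq (x y : ℝ) :
    cos x ^ 2 + cos y ^ 2 = 1 + cos (x + y) * cos (x - y) := by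
  rw [cos_add, cos_sub]
  have hx := sin_sq_add_cos_sq x
  have hy := sin_sq_add_cos_sq y
  have hx' : sin x ^ 2 = 1 - cos x ^ 2 := by linarith
  have hy' : sin y ^ 2 = 1 - cos y ^ 2 := by linarith
  have : (cos x * cos y - sin x * sin y) * (cos x * cos y + sin x * sin y)
      = cos x ^ 2 * cos y ^ 2 - sin x ^ 2 * sin y ^ 2 := by ring
  rw [this, hx', hy']
  ring

theorem stmt_15 :
    ∃ C > (0 : ℝ), ∀ (n : ℕ) (t α β : Fin n → ℝ) (ε s : ℝ),
      (∀ i, 0 ≤ t i) → (∑ i, t i = 1) →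
      (∀ i, α i ∈ Set.Ico (-(π / 2)) (π / 2)) →
      (∀ i, β i ∈ Set.Ico (-(π / 2)) (π / 2)) →
      0 ≤ ε → 0 ≤ s →
      cos (π / 8) ^ 2 - ε ≤ (1 / 2) * ∑ i, t i * (cos (α i) ^ 2 + cos (β i) ^ 2) →
      |(∑ i, t i * cos (α i - β i) ^ 2) - 1 / 2| ≤ s →
      ∑ i, t i * (|α i - β i| - π / 4) ^ 2 ≤ C * (ε + Real.sqrt s) := by
  refine ⟨120, by norm_num, ?_⟩
  intro n t α β ε s ht hsum hα hβ hε hs h1 h2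
  rcases le_total s 1 with hs1 | hs1
  · have hss : s ≤ √s := le_sqrt_of_sq_le (by nlinarith)
    have h8 : cos (π / 8) ^ 2 = 1 / 2 + √2 / 4 := by
      rw [cos_sq, show 2 * (π / 8) = π / 4 by ring, cos_pi_div_four]
      ring
    have hr : √2 ^ 2 = 2 := sq_sqrt (by norm_num)
    have hr0 : 0 ≤ √2 := sqrt_nonneg 2
    have hr1 : √2 ≤ 3 / 2 := by
      rw [sqrt_le_left (by norm_num)]
      norm_num
    have e1 : ∑ i, t i * (cos (α i) ^ 2 + cos (β i) ^ 2)
        = 1 + ∑ i, t i * (cos (α i + β i) * cos (α i - β i)) := by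
      rw [← hsum, ← Finset.sum_add_distrib]
      refine Finset.sum_congr rfl fun i _ => ?_
      rw [cos_sq_add_cos_sq_eq]
      ring
    rw [e1, h8] at h1
    have hle : ∑ i, t i * (|α i - β i| - π / 4) ^ 2 ≤
        ∑ i, t i * (40 * (cos (α i - β i) ^ 2
          - √2 * (cos (α i + β i) * cos (α i - β i)) + 1 / 2)) :=
      Finset.sum_le_sum fun i _ =>
        mul_le_mul_of_nonneg_left (pointwise_bound (hα i) (hβ i)) (ht i)
    have e2 : ∑ i, t i * (40 * (cos (α i - β i) ^ 2
          - √2 * (cos (α i + β i) * cos (α i - β i)) + 1 / 2))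
        = 40 * (∑ i, t i * cos (α i - β i) ^ 2
          - √2 * ∑ i, t i * (cos (α i + β i) * cos (α i - β i)) + 1 / 2 * ∑ i, t i) := by
      rw [Finset.mul_sum, Finset.mul_sum, ← Finset.sum_sub_distrib, ← Finset.sum_add_distrib,
        Finset.mul_sum]
      exact Finset.sum_congr rfl fun i _ => by ring
    rw [e2, hsum] at hle
    have h2' := (abs_le.mp h2).2
    have h3 : √2 * (√2 / 2 - 2 * ε)
        ≤ √2 * ∑ i, t i * (cos (α i + β i) * cos (α i - β i)) :=
      mul_le_mul_of_nonneg_left (by linarith) hr0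
    have h4 : √2 * ε ≤ 3 / 2 * ε := mul_le_mul_of_nonneg_right hr1 hε
    nlinarith
  · have hss : 1 ≤ √s := one_le_sqrt.mpr hs1
    have hle : ∑ i, t i * (|α i - β i| - π / 4) ^ 2 ≤ ∑ i, t i * 6 :=
      Finset.sum_le_sum fun i _ =>
        mul_le_mul_of_nonneg_left (sq_le_six (hα i) (hβ i)) (ht i)
    rw [← Finset.sum_mul, hsum] at hle
    linarith
end

section
/- There exists a constant C > 0 such that the following holds. Let n be a natural number, t : Fin n → ℝ with t i ≥ 0 and Σᵢ t i = 1, α, β : Fin n → ℝ with α i, β i ∈ [−π/2, π/2) for all i, and ε, s ≥ 0. Suppose (1/2)·Σᵢ t i·(cos²(α i) + cos²(β i)) ≥ cos²(π/8) − ε and |Σᵢ t i·cos²(α i − β i) − 1/2| ≤ s. Then Σᵢ t i·(α i + β i)² ≤ C·(ε + √s). -/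
open Real

/-!
Put `u = α + β` and `v = α - β`, so that `cos² α + cos² β = 1 + cos u cos v` and `|u| + |v| ≤ π`.
The quantity `cos² v - √2 cos u cos v + 1/2 = cos² v sin² u + (cos u cos v - √2/2)²` is
nonnegative, and the two hypotheses bound its average by `s + 2√2 ε`. It dominates a multiple of
`u²` pointwise (`sq_add_le_deficit`): either `cos u cos v` is far from `√2/2`, or it is bounded
below, which forces `|u| ≤ π/2` and `cos² v` bounded below, and then Jordan's inequality gives
`sin² u ≥ (2u/π)²`. Averaging yields a bound linear in `ε + s`; for `s ≤ 1` one has `s ≤ √s`, and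
for `s ≥ 1` the trivial bound `u² ≤ π²` suffices.
-/

/-- The sum lies in `[-π, π]`, and `π² < 10`. -/
lemma sq_add_le_ten {a b : ℝ} (ha : a ∈ Set.Ico (-(π / 2)) (π / 2))
    (hb : b ∈ Set.Ico (-(π / 2)) (π / 2)) : (a + b) ^ 2 ≤ 10 := by
  obtain ⟨ha1, ha2⟩ := ha
  obtain ⟨hb1, hb2⟩ := hb
  have hpi := pi_lt_d2
  nlinarith

lemma cos_add_mul_cos_sub (a b : ℝ) :
    cos (a + b) * cos (a - b) = cos a ^ 2 + cos b ^ 2 - 1 := by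
  rw [cos_add, cos_sub]
  have h1 := sin_sq_add_cos_sq a
  have h2 := sin_sq_add_cos_sq b
  linear_combination (-sin b ^ 2) * h1 + (cos a ^ 2 - 1) * h2

/-- The square of `a + b` is controlled by how far the pair is from the optimum, measured by
`cos² v - √2 cos u cos v + 1/2` with `u = a + b` and `v = a - b`. -/
lemma sq_add_le_deficit {a b : ℝ} (ha : a ∈ Set.Ico (-(π / 2)) (π / 2))
    (hb : b ∈ Set.Ico (-(π / 2)) (π / 2)) :
    (a + b) ^ 2 ≤
      160 * (cos (a - b) ^ 2 - √2 * (cos a ^ 2 + cos b ^ 2 - 1) + 1 / 2) := by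
  have h10 := sq_add_le_ten ha hb
  rw [← cos_add_mul_cos_sub]
  obtain ⟨ha1, ha2⟩ := ha
  obtain ⟨hb1, hb2⟩ := hb
  have hr : √2 ^ 2 = 2 := sq_sqrt (by norm_num)
  have hr1 : 1.4 ≤ √2 := Real.le_sqrt_of_sq_le (by norm_num)
  have hsq := sin_sq_add_cos_sq (a + b)
  have key : cos (a - b) ^ 2 - √2 * (cos (a + b) * cos (a - b)) + 1 / 2
      = cos (a - b) ^ 2 * sin (a + b) ^ 2 + (cos (a + b) * cos (a - b) - √2 / 2) ^ 2 := by
    linear_combination (-cos (a - b) ^ 2) * hsq - (1 / 4) * hr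
  rw [key]
  have hn : 0 ≤ cos (a - b) ^ 2 * sin (a + b) ^ 2 := by positivity
  rcases le_or_gt (cos (a + b) * cos (a - b)) (2 / 5) with hx | hx
  · -- Here `cos u cos v` is at least `1/4` away from `√2/2`.
    nlinarith
  · have hu : |a + b| ≤ π / 2 := by
      by_contra! hu
      -- Since `|u| + |v| ≤ π`, this forces `|v| ≤ π/2`, so `cos u ≤ 0 ≤ cos v`.
      have huπ : |a + b| ≤ π := abs_le.2 ⟨by linarith, by linarith⟩
      have huv : |a - b| ≤ π / 2 := by
        rcases le_abs.1 hu.le with h | h <;>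
          exact abs_le.2 ⟨by linarith, by linarith⟩
      have h1 : cos (a + b) ≤ 0 := by
        rw [← cos_abs]
        exact cos_nonpos_of_pi_div_two_le_of_le hu.le (by linarith [pi_pos])
      have h2 : 0 ≤ cos (a - b) := cos_nonneg_of_mem_Icc (abs_le.1 huv)
      nlinarith
    have hj : 2 / π * |a + b| ≤ |sin (a + b)| := mul_abs_le_abs_sin hu
    have hp : 3 / 5 ≤ 2 / π := by
      rw [div_le_div_iff₀ (by norm_num) pi_pos]
      linarith [pi_lt_d2]
    have hs : (9 / 25) * (a + b) ^ 2 ≤ sin (a + b) ^ 2 := by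
      rw [← sq_abs (a + b), ← sq_abs (sin (a + b))]
      have := abs_nonneg (a + b)
      have h3 : 3 / 5 * |a + b| ≤ |sin (a + b)| :=
        (mul_le_mul_of_nonneg_right hp this).trans hj
      nlinarith
    have hv : 4 / 25 ≤ cos (a - b) ^ 2 := by
      have h4 : (2 / 5 : ℝ) ^ 2 ≤ (cos (a + b) * cos (a - b)) ^ 2 :=
        pow_le_pow_left₀ (by norm_num) hx.le 2
      rw [mul_pow] at h4
      nlinarith [cos_sq_le_one (a + b), sq_nonneg (cos (a - b))]
    have := mul_le_mul hv hs (by positivity) (by positivity)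
    nlinarith [sq_nonneg (cos (a + b) * cos (a - b) - √2 / 2), sq_nonneg (a + b)]

theorem stmt_16 :
    ∃ C > (0 : ℝ), ∀ (n : ℕ) (t α β : Fin n → ℝ) (ε s : ℝ),
      (∀ i, 0 ≤ t i) → (∑ i, t i = 1) →
      (∀ i, α i ∈ Set.Ico (-(π / 2)) (π / 2)) →
      (∀ i, β i ∈ Set.Ico (-(π / 2)) (π / 2)) →
      0 ≤ ε → 0 ≤ s →
      cos (π / 8) ^ 2 - ε ≤ (1 / 2) * ∑ i, t i * (cos (α i) ^ 2 + cos (β i) ^ 2) →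
      |(∑ i, t i * cos (α i - β i) ^ 2) - 1 / 2| ≤ s →
      ∑ i, t i * (α i + β i) ^ 2 ≤ C * (ε + Real.sqrt s) := by
  refine ⟨480, by norm_num, ?_⟩
  intro n t α β ε s ht hsum hα hβ hε hs hwin hpar
  rcases le_or_gt 1 s with h1 | h1
  · have hs1 : 1 ≤ √s := Real.one_le_sqrt.2 h1
    have : ∑ i, t i * (α i + β i) ^ 2 ≤ ∑ i, t i * 10 :=
      Finset.sum_le_sum fun i _ => mul_le_mul_of_nonneg_left (sq_add_le_ten (hα i) (hβ i)) (ht i)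
    rw [← Finset.sum_mul, hsum] at this
    linarith
  · have hss : s ≤ √s := Real.le_sqrt_of_sq_le (by nlinarith)
    have hle : ∑ i, t i * (α i + β i) ^ 2 ≤ ∑ i, t i *
        (160 * (cos (α i - β i) ^ 2 - √2 * (cos (α i) ^ 2 + cos (β i) ^ 2 - 1) + 1 / 2)) :=
      Finset.sum_le_sum fun i _ =>
        mul_le_mul_of_nonneg_left (sq_add_le_deficit (hα i) (hβ i)) (ht i)
    have heq : ∑ i, t i *
        (160 * (cos (α i - β i) ^ 2 - √2 * (cos (α i) ^ 2 + cos (β i) ^ 2 - 1) + 1 / 2))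
        = 160 * ((∑ i, t i * cos (α i - β i) ^ 2)
          - √2 * (∑ i, t i * (cos (α i) ^ 2 + cos (β i) ^ 2)) + (√2 + 1 / 2) * ∑ i, t i) := by
      simp only [Finset.mul_sum, ← Finset.sum_add_distrib, ← Finset.sum_sub_distrib]
      exact Finset.sum_congr rfl fun i _ => by ring
    rw [heq, hsum] at hle
    have hc : cos (π / 8) ^ 2 = 1 / 2 + √2 / 4 := by
      rw [cos_sq, show 2 * (π / 8) = π / 4 by ring, cos_pi_div_four]
      ring
    rw [hc] at hwin
    have hr : √2 ^ 2 = 2 := sq_sqrt (by norm_num)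
    have hr1 : √2 ≤ 3 / 2 := Real.sqrt_le_iff.2 ⟨by norm_num, by norm_num⟩
    have hr0 : 0 ≤ √2 := Real.sqrt_nonneg 2
    have hp := (abs_le.1 hpar).2
    have hw := mul_le_mul_of_nonneg_left hwin hr0
    have hε2 := mul_le_mul_of_nonneg_right hr1 hε
    have hsq0 := Real.sqrt_nonneg s
    nlinarith
end

section
/- There exists a constant C > 0 such that the following holds. Let n be a natural number, t : Fin n → ℝ with t i ≥ 0 and Σᵢ t i = 1, α, β : Fin n → ℝ with α i, β i ∈ [−π/2, π/2) for all i, and ε, s ≥ 0. Suppose (1/2)·Σᵢ t i·(cos²(α i) + cos²(β i)) ≥ cos²(π/8) − ε and |Σᵢ t i·cos²(α i − β i) − 1/2| ≤ s. Then Σᵢ t i·cos²(2(α i − β i)) ≤ C·(ε + √s). -/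
/-!
Write `δ = α - β` and `x = |cos δ|`. Since `cos² α + cos² β = 1 + cos (α + β) cos δ ≤ 1 + x`, the
success hypothesis forces the mean of `x` to be at least `√2/2 - 2ε`, while the second hypothesis
says that the mean of `x²` is at most `1/2 + s`. Hence the mean of `(x - √2/2)²` is at most
`s + 2√2 ε`. As `cos² (2δ) = (2x² - 1)² = 4 (x - √2/2)² (x + √2/2)² ≤ 12 (x - √2/2)²` on `[0, 1]`,
this bounds the mean of `cos² (2δ)` linearly in `ε` and `s`. The lemma `cos_sq_two_mul_sub_le` is
this argument in pointwise form. For `s ≤ 1` one has `s ≤ √s`, and for `s > 1` the trivial bound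
by `1` suffices.
-/

open Real

/-- The right-hand side is linear in the two quantities whose means are controlled by the success
probability and by the parity advantage. -/
lemma cos_sq_two_mul_sub_le (a b : ℝ) :
    cos (2 * (a - b)) ^ 2 ≤
      12 * (cos (a - b) ^ 2 + 1 / 2) - 12 * √2 * (cos a ^ 2 + cos b ^ 2 - 1) := by
  have hr : √2 ^ 2 = 2 := Real.sq_sqrt (by norm_num)
  have hr0 : 0 ≤ √2 := Real.sqrt_nonneg 2
  have hr1 : √2 ≤ 1.42 := Real.sqrt_le_iff.2 (by norm_num)
  have hsum : cos a ^ 2 + cos b ^ 2 - 1 = cos (a + b) * cos (a - b) := by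
    rw [cos_add, cos_sub]
    linear_combination (-cos b ^ 2 + 1) * sin_sq_add_cos_sq a + sin a ^ 2 * sin_sq_add_cos_sq b
  have hx : cos a ^ 2 + cos b ^ 2 - 1 ≤ |cos (a - b)| := by
    rw [hsum]
    calc cos (a + b) * cos (a - b) ≤ |cos (a + b) * cos (a - b)| := le_abs_self _
      _ = |cos (a + b)| * |cos (a - b)| := abs_mul _ _
      _ ≤ 1 * |cos (a - b)| := by gcongr; exact abs_cos_le_one _
      _ = |cos (a - b)| := one_mul _
  have hx1 : |cos (a - b)| ≤ 1 := abs_cos_le_one _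
  have hx0 : 0 ≤ |cos (a - b)| := abs_nonneg _
  rw [cos_two_mul, ← sq_abs (cos (a - b))]
  generalize |cos (a - b)| = x at *
  have hfac : (x + √2 / 2) ^ 2 ≤ 3 := by nlinarith
  have hmul : 12 * √2 * (cos a ^ 2 + cos b ^ 2 - 1) ≤ 12 * √2 * x := by gcongr
  have hkey : (2 * x ^ 2 - 1) ^ 2 ≤ 12 * (x - √2 / 2) ^ 2 := by
    have hsq : 2 * x ^ 2 - 1 = 2 * ((x - √2 / 2) * (x + √2 / 2)) := by
      linear_combination hr / 2
    rw [hsq]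
    nlinarith [mul_le_mul_of_nonneg_left hfac (sq_nonneg (x - √2 / 2))]
  nlinarith

theorem stmt_17 :
    ∃ C > (0 : ℝ), ∀ (n : ℕ) (t α β : Fin n → ℝ) (ε s : ℝ),
      (∀ i, 0 ≤ t i) → (∑ i, t i = 1) →
      (∀ i, α i ∈ Set.Ico (-(π / 2)) (π / 2)) →
      (∀ i, β i ∈ Set.Ico (-(π / 2)) (π / 2)) →
      0 ≤ ε → 0 ≤ s →
      cos (π / 8) ^ 2 - ε ≤ (1 / 2) * ∑ i, t i * (cos (α i) ^ 2 + cos (β i) ^ 2) →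
      |(∑ i, t i * cos (α i - β i) ^ 2) - 1 / 2| ≤ s →
      ∑ i, t i * cos (2 * (α i - β i)) ^ 2 ≤ C * (ε + Real.sqrt s) := by
  refine ⟨36, by norm_num, ?_⟩
  intro n t α β ε s ht hsum _ _ hε hs hsucc hadv
  rcases le_or_gt s 1 with hs1 | hs1
  · have hss : s ≤ √s := Real.le_sqrt_of_sq_le (by nlinarith)
    have hr : √2 ^ 2 = 2 := Real.sq_sqrt (by norm_num)
    have hr0 : 0 ≤ √2 := Real.sqrt_nonneg 2
    have hr1 : √2 ≤ 1.42 := Real.sqrt_le_iff.2 (by norm_num)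
    have hcos : cos (π / 8) ^ 2 = 1 / 2 + √2 / 4 := by
      rw [cos_sq, show 2 * (π / 8) = π / 4 by ring, cos_pi_div_four]
      ring
    have hle : ∑ i, t i * cos (2 * (α i - β i)) ^ 2 ≤
        12 * (∑ i, t i * cos (α i - β i) ^ 2)
          - 12 * √2 * (∑ i, t i * (cos (α i) ^ 2 + cos (β i) ^ 2))
          + (6 + 12 * √2) * ∑ i, t i := by
      rw [Finset.mul_sum, Finset.mul_sum, Finset.mul_sum, ← Finset.sum_sub_distrib,
        ← Finset.sum_add_distrib]
      refine Finset.sum_le_sum fun i _ => ?_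
      have h := mul_le_mul_of_nonneg_left (cos_sq_two_mul_sub_le (α i) (β i)) (ht i)
      linarith
    rw [hsum] at hle
    rw [hcos] at hsucc
    have hadv' := (abs_le.1 hadv).2
    have hP := mul_le_mul_of_nonneg_left hsucc hr0
    have hεr := mul_le_mul_of_nonneg_right hr1 hε
    nlinarith
  · have hle : ∑ i, t i * cos (2 * (α i - β i)) ^ 2 ≤ ∑ i, t i :=
      Finset.sum_le_sum fun i _ => mul_le_of_le_one_right (ht i) (cos_sq_le_one _)
    have h1 : 1 ≤ √s := Real.one_le_sqrt.2 hs1.le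
    linarith
end

section
/- For all real numbers α, β ∈ [−3π/16, 3π/16]: cos²((α − β)/2) − (cos²(α) + cos²(β))/2 ≥ (cos(3π/8)/4)·(α + β)². -/
/-!
With `c = cos (3π/8)`, the function `x ↦ cos² x + c x²` is concave on `[-3π/16, 3π/16]`
(`concaveOn_cos_sq_add`). Its midpoint inequality at `α` and `-β` is the claim, because the
quadratic term contributes `c * ((α² + β²) / 2 - ((α - β) / 2)²) = c / 4 * (α + β)²`.
-/

open Real

/-- The second derivative is `2 * (cos (3π/8) - cos (2x))`, which is nonpositive when
`|2x| ≤ 3π/8`. The midpoint inequality for this function is the strong concavity of `cos²`. -/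
lemma concaveOn_cos_sq_add :
    ConcaveOn ℝ (Set.Icc (-(3 * π / 16)) (3 * π / 16))
      (fun x => cos x ^ 2 + cos (3 * π / 8) * x ^ 2) := by
  refine concaveOn_of_hasDerivWithinAt2_nonpos
    (f' := fun x => -sin (2 * x) + 2 * cos (3 * π / 8) * x)
    (f'' := fun x => -(2 * cos (2 * x)) + 2 * cos (3 * π / 8))
    (convex_Icc _ _) (by fun_prop) ?_ ?_ ?_
  · intro x _
    have h := ((hasDerivAt_cos x).pow 2).add (((hasDerivAt_id x).pow 2).const_mul (cos (3 * π / 8)))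
    refine (h.congr_deriv ?_).hasDerivWithinAt
    rw [sin_two_mul]
    simp
    ring
  · intro x _
    have h := ((hasDerivAt_id x).const_mul 2).sin.neg.add
      ((hasDerivAt_id x).const_mul (2 * cos (3 * π / 8)))
    refine (h.congr_deriv ?_).hasDerivWithinAt
    simp
    ring
  · intro x hx
    obtain ⟨h₁, h₂⟩ := interior_subset hx
    have h : cos (3 * π / 8) ≤ cos (2 * x) := by
      rw [← cos_abs (2 * x)]
      apply cos_le_cos_of_nonneg_of_le_pi (abs_nonneg _)
      · linarith [pi_pos]
      · rw [abs_le]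
        constructor <;> linarith
    linarith

theorem stmt_19 (α β : ℝ)
    (hα : α ∈ Set.Icc (-(3 * π / 16)) (3 * π / 16))
    (hβ : β ∈ Set.Icc (-(3 * π / 16)) (3 * π / 16)) :
    cos ((α - β) / 2) ^ 2 - (cos α ^ 2 + cos β ^ 2) / 2
      ≥ (cos (3 * π / 8) / 4) * (α + β) ^ 2 := by
  have hβ' : -β ∈ Set.Icc (-(3 * π / 16)) (3 * π / 16) :=
    ⟨by linarith [hβ.2], by linarith [hβ.1]⟩
  have h := concaveOn_cos_sq_add.2 hα hβ' (by norm_num : (0 : ℝ) ≤ 1 / 2)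
    (by norm_num : (0 : ℝ) ≤ 1 / 2) (by norm_num)
  have hmid : (1 / 2 : ℝ) * α + 1 / 2 * -β = (α - β) / 2 := by ring
  simp only [smul_eq_mul, cos_neg, hmid] at h
  linarith
end
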